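/- arXiv:2406.15589 — 2 statements merged into one kernel-verified Lean document; each statement's English description precedes it below -/
import Mathlib

section
/- Suppose q > 4. Then the evaluation map P ↦ (F_ω(P))_{ω ∈ Ω} from W = F² × C to T₀^Ω is injective, so the code C = {(F_ω(P))_{ω ∈ Ω} : P ∈ W} has exactly q⁵ codewords; moreover any two distinct codewords differ in at least q − 4 of the q coordinates, and the minimum Hamming distance of C is exactly q − 4. Thus C is a K-linear MDS code with parameters [q, 5, q−4] over the q-element alphabet T₀. -/
/-- The affine form `F_ω` (case `n = 3`) associated to `ω = (ω₁, ω₂) ∈ F²`. -/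
def Fw {F : Type*} [Field F] (q : ℕ) (a b ω₁ ω₂ x y z : F) : F :=
  z ^ q - z + a ^ q * (x ^ (2 * q) + y ^ (2 * q)) - a * (x ^ 2 + y ^ 2)
    - (b ^ q - b) * (x ^ (q + 1) + y ^ (q + 1))
    + (2 * a ^ q * ω₁ ^ q - (b ^ q - b) * ω₁) * x ^ q
    + (2 * a ^ q * ω₂ ^ q - (b ^ q - b) * ω₂) * y ^ q
    - (2 * a * ω₁ + (b ^ q - b) * ω₁ ^ q) * x
    - (2 * a * ω₂ + (b ^ q - b) * ω₂ ^ q) * y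

/-- The codeword of a point `P ∈ F³`: its coordinates are indexed by
`t ∈ K = {t : F // t^q = t}` (parametrizing `Ω = {(t + εt², t³ + εt⁴) : t ∈ K}`),
and the coordinate at `t` is the value of `F_{ω(t)}` at `P`. -/
def codeword {F : Type*} [Field F] (q : ℕ) (a b ε : F) (P : F × F × F)
    (t : {t : F // t ^ q = t}) : F :=
  Fw q a b (t.1 + ε * t.1 ^ 2) (t.1 ^ 3 + ε * t.1 ^ 4) P.1 P.2.1 P.2.2

/-!
Let `φ x = x ^ q`, `D = φ - 1`, `B = b ^ q - b` and `L ω = 2 a ω + B φ(ω)`, and let `K` and `T₀`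
be the `q`-element kernels of `φ - 1` and `φ + 1`. Since `φ` is an involution and `φ B = -B`,
`F_ω(x, y, z) = D z + h x + h y + D (L ω₁ * x) + D (L ω₂ * y)` with `h x = D (a x²) - B x φ(x)`.
As `L` is `K`-linear, on `ω = (t + εt², t³ + εt⁴)` this is a polynomial in `t` of degree at most
`4`, whose coefficients lie in `T₀`. The discriminant condition makes `L` injective, so `L 1` and
`L ε` are `K`-independent; hence the coefficients determine `x` and `y`, and then `D z`, which
determines `z` in the transversal of `K`. So distinct codewords agree at most four times.
There are `q⁵` of them over the `q`-element alphabet `T₀`, and the Singleton bound shows that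
two of them do agree four times.
-/

section HammingDistance

open Polynomial

variable {ι α : Type*} [Fintype ι] [DecidableEq α]

theorem hammingDist_le_card_sub_of_forall_mem_eq {f g : ι → α} {S : Finset ι}
    (h : ∀ i ∈ S, f i = g i) : hammingDist f g ≤ Fintype.card ι - S.card := by
  classical
  rw [← Finset.card_compl]
  refine Finset.card_le_card fun i hi => Finset.mem_compl.2 fun hS => ?_
  exact (Finset.mem_filter.1 hi).2 (h i hS)

theorem injOn_of_le_hammingDist {σ : Type*} {W : Set σ} {f : σ → ι → α} {d : ℕ} (hd : 0 < d)
    (hdist : ∀ P ∈ W, ∀ Q ∈ W, P ≠ Q → d ≤ hammingDist (f P) (f Q)) : Set.InjOn f W := by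
  intro P hP Q hQ h
  by_contra hne
  exact (hammingDist_pos.1 (hd.trans_le (hdist P hP Q hQ hne))) h

theorem exists_ne_hammingDist_le_card_sub {σ : Type*} {W : Finset σ} {T : Finset α}
    {f : σ → ι → α} (hfT : ∀ P ∈ W, ∀ i, f P i ∈ T) {k : ℕ} (hk : k ≤ Fintype.card ι)
    (hW : T.card ^ k < W.card) :
    ∃ P ∈ W, ∃ Q ∈ W, P ≠ Q ∧ hammingDist (f P) (f Q) ≤ Fintype.card ι - k := by
  classical
  obtain ⟨S, -, rfl⟩ := Finset.exists_subset_card_eq (s := (Finset.univ : Finset ι)) hk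
  obtain ⟨P, hP, Q, hQ, hne, heq⟩ := Finset.exists_ne_map_eq_of_card_lt_of_maps_to
    (s := W) (t := Fintype.piFinset fun _ : S => T) (f := fun P i => f P i)
    (by simpa using hW) (fun P hP => by simpa using fun i _ => hfT P hP i)
  exact ⟨P, hP, Q, hQ, hne,
    hammingDist_le_card_sub_of_forall_mem_eq fun i hi => congrFun heq ⟨i, hi⟩⟩

theorem card_sub_le_hammingDist_eval {R : Type*} [CommRing R] [IsDomain R] [DecidableEq R]
    {p r : R[X]} (hpr : p ≠ r) {d : ℕ} (hp : p.natDegree ≤ d) (hr : r.natDegree ≤ d)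
    {v : ι → R} (hv : Function.Injective v) :
    Fintype.card ι - d ≤ hammingDist (fun i => p.eval (v i)) (fun i => r.eval (v i)) := by
  by_contra! hlt
  refine hpr (eq_of_natDegree_lt_card_of_eval_eq p r
    (f := fun i : {i // p.eval (v i) = r.eval (v i)} => v i)
    (hv.comp Subtype.val_injective) (fun i => i.2) ?_)
  have hsum := Finset.card_filter_add_card_filter_not (s := (Finset.univ : Finset ι))
    (fun i => p.eval (v i) = r.eval (v i))
  rw [Finset.card_univ] at hsum
  rw [Fintype.card_subtype]
  change Finset.card {i | ¬p.eval (v i) = r.eval (v i)} < _ at hlt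
  omega

end HammingDistance

section Counting

open Polynomial

theorem card_eq_natCard_range_of_existsUnique {α β : Type*} {f : α → β} {C : Finset α}
    (hC : ∀ x, ∃! c, c ∈ C ∧ f c = f x) : C.card = Nat.card (Set.range f) := by
  rw [← Nat.card_eq_finsetCard]
  refine Nat.card_eq_of_bijective (fun c : C => (⟨f c, c, rfl⟩ : Set.range f)) ⟨?_, ?_⟩
  · intro c c' h
    exact Subtype.ext ((hC c').unique ⟨c.2, congrArg Subtype.val h⟩ ⟨c'.2, rfl⟩)
  · rintro ⟨_, x, rfl⟩
    obtain ⟨c, ⟨hc, h⟩, -⟩ := hC x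
    exact ⟨⟨c, hc⟩, Subtype.ext h⟩

theorem card_filter_snd_snd_mem {α β γ : Type*} [Fintype α] [Fintype β] [Fintype γ]
    [DecidableEq γ] (C : Finset γ) :
    (Finset.univ.filter fun P : α × β × γ => P.2.2 ∈ C).card =
      Fintype.card α * Fintype.card β * C.card := by
  have hprod : (Finset.univ.filter fun P : α × β × γ => P.2.2 ∈ C) =
      Finset.univ ×ˢ Finset.univ ×ˢ C := by
    ext P
    simp
  rw [hprod, Finset.card_product, Finset.card_product, Finset.card_univ, Finset.card_univ,
    mul_assoc]

theorem ncard_setOf_pow_eq_mul_le {R : Type*} [CommRing R] [IsDomain R] {q : ℕ} (hq : 1 < q)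
    (s : R) : {x : R | x ^ q = s * x}.ncard ≤ q := by
  set p : R[X] := X ^ q - C s * X with hp
  have hlin : (C s * X).natDegree < (X ^ q : R[X]).natDegree := by
    rw [natDegree_X_pow]
    exact ((natDegree_C_mul_le s X).trans natDegree_X_le).trans_lt hq
  have hdeg : p.natDegree = q := by
    rw [hp, natDegree_sub_eq_left_of_natDegree_lt hlin, natDegree_X_pow]
  have hp0 : p ≠ 0 := ne_zero_of_natDegree_gt (n := 0) (by omega)
  have hroots : {x : R | x ^ q = s * x} = p.rootSet R := by
    ext x
    rw [mem_rootSet_of_ne hp0]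
    simp [hp, sub_eq_zero]
  rw [hroots, ← hdeg]
  exact ncard_rootSet_le p R

theorem exists_ringHom_eq_pow {q : ℕ} (hq : IsPrimePow q) {R : Type*} [CommRing R] [IsDomain R]
    [Fintype R] {m : ℕ} (hR : Fintype.card R = q ^ m) : ∃ φ : R →+* R, ∀ x, φ x = x ^ q := by
  obtain ⟨p, n, hp, -, rfl⟩ := hq
  have : Fact p.Prime := ⟨hp.nat_prime⟩
  have : CharP R p := charP_of_card_eq_prime_pow (hR.trans (pow_mul p n m).symm)
  exact ⟨iterateFrobenius R p n, iterateFrobenius_def p n⟩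

end Counting

section Involution

open Polynomial

variable {F : Type*} [Field F] (φ : F →+* F)

/-- The additive map `x ↦ φ x - x`. For an involution `φ` with fixed field `K` its kernel is `K`
and its values lie in `T₀ = {u | φ u = -u}`. -/
def conjSub : F →+ F := φ.toAddMonoidHom - AddMonoidHom.id F

theorem conjSub_apply (x : F) : conjSub φ x = φ x - x := rfl

variable {φ} in
theorem map_conjSub (hφφ : Function.Involutive φ) (x : F) : φ (conjSub φ x) = -conjSub φ x := by
  simp only [conjSub_apply, map_sub, hφφ x, neg_sub]

variable {φ} in
theorem conjSub_eq_conjSub_iff {x y : F} :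
    conjSub φ x = conjSub φ y ↔ φ (x - y) = x - y := by
  rw [← sub_eq_zero, ← map_sub, conjSub_apply, sub_eq_zero]

/-- The map `L ω = 2 a ω + B φ(ω)`: the coefficient of `x` in `F_ω(x, y, z)` is `-L ω₁`, and
that of `y` is `-L ω₂`, when `B = b ^ q - b`. -/
def linearCoeff (a B : F) : F →+ F :=
  AddMonoidHom.mulLeft (2 * a) + (AddMonoidHom.mulLeft B).comp φ.toAddMonoidHom

theorem linearCoeff_apply (a B w : F) : linearCoeff φ a B w = 2 * a * w + B * φ w := rfl

/-- The contribution of one of the variables `x`, `y` to the part of `F_ω(x, y, z)` that does not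
depend on `ω`. -/
def quadraticPart (a B x : F) : F := conjSub φ (a * x ^ 2) - B * (x * φ x)

/-- The polynomial in `t` whose value at `t ∈ K` is the coordinate at `t` of the codeword of `P`,
when `φ x = x ^ q` and `B = b ^ q - b`. -/
noncomputable def codewordPoly [DecidableEq F] (a B ε : F) (P : F × F × F) : F[X] :=
  ofFn 5 ![conjSub φ P.2.2 + quadraticPart φ a B P.1 + quadraticPart φ a B P.2.1,
    conjSub φ (linearCoeff φ a B 1 * P.1), conjSub φ (linearCoeff φ a B ε * P.1),
    conjSub φ (linearCoeff φ a B 1 * P.2.1), conjSub φ (linearCoeff φ a B ε * P.2.1)]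

theorem natDegree_codewordPoly_le [DecidableEq F] (a B ε : F) (P : F × F × F) :
    (codewordPoly φ a B ε P).natDegree ≤ 4 :=
  Nat.le_of_lt_succ (ofFn_natDegree_lt (by norm_num) _)

theorem eval_codewordPoly [DecidableEq F] (a B ε : F) (P : F × F × F) (t : F) :
    (codewordPoly φ a B ε P).eval t =
      conjSub φ P.2.2 + quadraticPart φ a B P.1 + quadraticPart φ a B P.2.1
        + conjSub φ (linearCoeff φ a B 1 * P.1) * t
        + conjSub φ (linearCoeff φ a B ε * P.1) * t ^ 2
        + conjSub φ (linearCoeff φ a B 1 * P.2.1) * t ^ 3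
        + conjSub φ (linearCoeff φ a B ε * P.2.1) * t ^ 4 := by
  simp [codewordPoly, ofFn_eq_sum_monomial, Fin.sum_univ_five]

variable {φ} {a B ε : F}

theorem map_quadraticPart (hφφ : Function.Involutive φ) (hB : φ B = -B) (x : F) :
    φ (quadraticPart φ a B x) = -quadraticPart φ a B x := by
  simp only [quadraticPart, map_sub, map_mul, map_conjSub hφφ, hφφ x, hB]
  ring

theorem linearCoeff_mul_of_map_eq {t : F} (ht : φ t = t) (w : F) :
    linearCoeff φ a B (w * t) = linearCoeff φ a B w * t := by
  simp only [linearCoeff_apply, map_mul, ht]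
  ring

theorem linearCoeff_injective (hφφ : Function.Involutive φ) (hB : φ B = -B)
    (hab : 4 * (a * φ a) + B ^ 2 ≠ 0) : Function.Injective (linearCoeff φ a B) := by
  refine (injective_iff_map_eq_zero _).2 fun w hw => ?_
  rw [linearCoeff_apply] at hw
  have hw_conj : 2 * φ a * φ w - B * w = 0 := by
    simpa [hφφ w, hB, map_ofNat, sub_eq_add_neg] using congrArg φ hw
  -- `4 a φ(a) + B²` is the determinant of these two linear equations in `w` and `φ w`
  have hdet : (4 * (a * φ a) + B ^ 2) * w = 0 := by
    linear_combination 2 * φ a * hw - B * hw_conj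
  exact (mul_eq_zero.1 hdet).resolve_left hab

theorem eq_zero_of_conjSub_linearCoeff_mul_eq_zero
    (hL : Function.Injective (linearCoeff φ a B)) (hε : φ ε ≠ ε) {x : F}
    (h1 : conjSub φ (linearCoeff φ a B 1 * x) = 0)
    (h2 : conjSub φ (linearCoeff φ a B ε * x) = 0) : x = 0 := by
  by_contra hx
  rw [conjSub_apply, sub_eq_zero] at h1 h2
  have hL1 : linearCoeff φ a B 1 ≠ 0 := (map_ne_zero_iff _ hL).2 one_ne_zero
  set k := linearCoeff φ a B ε / linearCoeff φ a B 1 with hk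
  have hk_fixed : φ k = k := by
    rw [hk, ← mul_div_mul_right _ _ hx, map_div₀, h1, h2]
  have hk_eq : k = ε := hL <| by
    rw [← one_mul k, linearCoeff_mul_of_map_eq hk_fixed, hk, mul_div_cancel₀ _ hL1]
  exact hε (hk_eq ▸ hk_fixed)

theorem eq_and_eq_and_conjSub_eq_of_codewordPoly_eq [DecidableEq F]
    (hL : Function.Injective (linearCoeff φ a B)) (hε : φ ε ≠ ε) {x y z x' y' z' : F}
    (h : codewordPoly φ a B ε (x, y, z) = codewordPoly φ a B ε (x', y', z')) :
    x = x' ∧ y = y' ∧ conjSub φ z = conjSub φ z' := by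
  have hcoeff := injective_ofFn 5 h
  have eq_of_conjSub {u u' : F}
      (hu1 : conjSub φ (linearCoeff φ a B 1 * u) = conjSub φ (linearCoeff φ a B 1 * u'))
      (hu2 : conjSub φ (linearCoeff φ a B ε * u) = conjSub φ (linearCoeff φ a B ε * u')) :
      u = u' := by
    refine sub_eq_zero.1 (eq_zero_of_conjSub_linearCoeff_mul_eq_zero hL hε ?_ ?_) <;>
      simp only [mul_sub, map_sub, hu1, hu2, sub_self]
  obtain rfl := eq_of_conjSub (congrFun hcoeff 1) (congrFun hcoeff 2)
  obtain rfl := eq_of_conjSub (congrFun hcoeff 3) (congrFun hcoeff 4)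
  exact ⟨rfl, rfl, by simpa using congrFun hcoeff 0⟩

variable {q : ℕ} {b : F}

theorem natCard_fixedPoints_and_range_conjSub [Finite F] (hq : 1 < q)
    (hF : Nat.card F = q ^ 2) (hφ : ∀ x, φ x = x ^ q) (hφφ : Function.Involutive φ) :
    Nat.card {t : F // t ^ q = t} = q ∧ Nat.card (Set.range (conjSub φ)) = q := by
  have hfixed : Nat.card {t : F // t ^ q = t} ≤ q := by
    simpa only [one_mul] using! ncard_setOf_pow_eq_mul_le hq (1 : F)
  have hrange : Nat.card (Set.range (conjSub φ)) ≤ q := by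
    refine le_trans (Set.ncard_le_ncard ?_) (ncard_setOf_pow_eq_mul_le hq (-1 : F))
    rintro _ ⟨x, rfl⟩
    rw [Set.mem_ofPred_eq, ← hφ, map_conjSub hφφ, neg_one_mul]
  have hker : Nat.card (conjSub φ).ker = Nat.card {t : F // t ^ q = t} :=
    Nat.card_congr <| Equiv.subtypeEquivRight fun x => by
      rw [AddMonoidHom.mem_ker, conjSub_apply, sub_eq_zero, hφ]
  have hprod : Nat.card {t : F // t ^ q = t} * Nat.card (Set.range (conjSub φ)) = q ^ 2 := by
    rw [← hker, ← hF, ← (conjSub φ).ker.card_mul_index, AddSubgroup.index_ker]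
    rfl
  constructor <;> nlinarith

theorem Fw_eq (hφ : ∀ x, φ x = x ^ q) (hφφ : Function.Involutive φ) (ω₁ ω₂ x y z : F) :
    Fw q a b ω₁ ω₂ x y z =
      conjSub φ z + quadraticPart φ a (conjSub φ b) x + quadraticPart φ a (conjSub φ b) y
        + conjSub φ (linearCoeff φ a (conjSub φ b) ω₁ * x)
        + conjSub φ (linearCoeff φ a (conjSub φ b) ω₂ * y) := by
  simp only [Fw, quadraticPart, linearCoeff_apply, conjSub_apply, pow_succ _ q, mul_comm 2 q,
    pow_mul, ← hφ, map_add, map_sub, map_mul, map_pow, map_ofNat, hφφ _]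
  ring

theorem map_Fw (hφ : ∀ x, φ x = x ^ q) (hφφ : Function.Involutive φ) (ω₁ ω₂ x y z : F) :
    φ (Fw q a b ω₁ ω₂ x y z) = -Fw q a b ω₁ ω₂ x y z := by
  simp only [Fw_eq hφ hφφ, map_add, map_conjSub hφφ, map_quadraticPart hφφ (map_conjSub hφφ b)]
  ring

theorem codeword_eq_eval [DecidableEq F] (hφ : ∀ x, φ x = x ^ q) (hφφ : Function.Involutive φ)
    (P : F × F × F) :
    codeword q a b ε P = fun t => (codewordPoly φ a (conjSub φ b) ε P).eval t.1 := by
  funext ⟨t, ht⟩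
  rw [← hφ] at ht
  have ht_pow (n : ℕ) : φ (t ^ n) = t ^ n := by rw [map_pow, ht]
  have conjSub_mul_pow (u : F) (n : ℕ) : conjSub φ (u * t ^ n) = conjSub φ u * t ^ n := by
    simp only [conjSub_apply, map_mul, ht_pow, sub_mul]
  have conjSub_curve (n : ℕ) (x : F) :
      conjSub φ (linearCoeff φ a (conjSub φ b) (t ^ n + ε * t ^ (n + 1)) * x) =
        conjSub φ (linearCoeff φ a (conjSub φ b) 1 * x) * t ^ n
          + conjSub φ (linearCoeff φ a (conjSub φ b) ε * x) * t ^ (n + 1) := by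
    rw [← one_mul (t ^ n), map_add, linearCoeff_mul_of_map_eq (ht_pow n),
      linearCoeff_mul_of_map_eq (ht_pow (n + 1)), add_mul, mul_right_comm, mul_right_comm _ _ x,
      map_add, conjSub_mul_pow, conjSub_mul_pow, one_mul]
  have h1 := conjSub_curve 1 P.1
  rw [pow_one] at h1
  simp only [codeword, Fw_eq hφ hφφ, h1, conjSub_curve 3, eval_codewordPoly]
  ring

theorem codeword_pow_eq_neg (hφ : ∀ x, φ x = x ^ q) (hφφ : Function.Involutive φ)
    (P : F × F × F) (t : {t : F // t ^ q = t}) :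
    codeword q a b ε P t ^ q = -codeword q a b ε P t := by
  rw [← hφ, codeword, map_Fw hφ hφφ]

theorem card_sub_four_le_hammingDist_codeword [DecidableEq F] [Fintype {t : F // t ^ q = t}]
    (hφ : ∀ x, φ x = x ^ q) (hφφ : Function.Involutive φ)
    (hab : 4 * a ^ (q + 1) + (b ^ q - b) ^ 2 ≠ 0) (hε : ε ^ q ≠ ε) {C : Set F}
    (hC : Set.InjOn (conjSub φ) C) {P Q : F × F × F} (hP : P.2.2 ∈ C) (hQ : Q.2.2 ∈ C)
    (hne : P ≠ Q) :
    Fintype.card {t : F // t ^ q = t} - 4 ≤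
      hammingDist (codeword q a b ε P) (codeword q a b ε Q) := by
  have hL : Function.Injective (linearCoeff φ a (conjSub φ b)) := by
    refine linearCoeff_injective hφφ (map_conjSub hφφ b) ?_
    rwa [conjSub_apply, hφ, hφ, ← pow_succ']
  rw [codeword_eq_eval hφ hφφ, codeword_eq_eval hφ hφφ]
  refine card_sub_le_hammingDist_eval (fun hpoly => hne ?_) (natDegree_codewordPoly_le ..)
    (natDegree_codewordPoly_le ..) Subtype.val_injective
  obtain ⟨hx, hy, hz⟩ := eq_and_eq_and_conjSub_eq_of_codewordPoly_eq hL (by rwa [hφ]) hpoly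
  exact Prod.ext hx (Prod.ext hy (hC hP hQ hz))

theorem exists_ne_hammingDist_codeword_le [Finite F] [DecidableEq F]
    [Fintype {t : F // t ^ q = t}] (hφ : ∀ x, φ x = x ^ q) (hφφ : Function.Involutive φ)
    (hq : 1 < q) {k : ℕ} (hk : k ≤ Fintype.card {t : F // t ^ q = t}) {W : Finset (F × F × F)}
    (hW : q ^ k < W.card) :
    ∃ P ∈ W, ∃ Q ∈ W, P ≠ Q ∧ hammingDist (codeword q a b ε P) (codeword q a b ε Q) ≤
      Fintype.card {t : F // t ^ q = t} - k := by
  have hfin : {u : F | u ^ q = -1 * u}.Finite := Set.toFinite _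
  have hT : hfin.toFinset.card ≤ q := by
    rw [← Set.ncard_eq_toFinset_card _ hfin]
    exact ncard_setOf_pow_eq_mul_le hq (-1)
  refine exists_ne_hammingDist_le_card_sub (T := hfin.toFinset) (fun P _ t => ?_) hk
    ((Nat.pow_le_pow_left hT k).trans_lt hW)
  rw [Set.Finite.mem_toFinset, Set.mem_ofPred_eq, codeword_pow_eq_neg hφ hφφ, neg_one_mul]

end Involution

theorem mds_code_general (q : ℕ) (hq : IsPrimePow q) (hq4 : 4 < q)
    (F : Type*) [Field F] [Fintype F] [DecidableEq F] (hF : Fintype.card F = q ^ 2)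
    (a b : F) (hab : 4 * a ^ (q + 1) + (b ^ q - b) ^ 2 ≠ 0)
    (ε : F) (hε : ε ^ q ≠ ε)
    (C : Finset F) (hC : ∀ x : F, ∃! c : F, c ∈ C ∧ (c - x) ^ q = c - x) :
    (∀ P ∈ Finset.univ.filter (fun P : F × F × F => P.2.2 ∈ C),
      ∀ P' ∈ Finset.univ.filter (fun P : F × F × F => P.2.2 ∈ C),
        codeword q a b ε P = codeword q a b ε P' → P = P') ∧
    ((Finset.univ.filter (fun P : F × F × F => P.2.2 ∈ C)).image
        (codeword q a b ε)).card = q ^ 5 ∧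
    (∀ P ∈ Finset.univ.filter (fun P : F × F × F => P.2.2 ∈ C),
      ∀ P' ∈ Finset.univ.filter (fun P : F × F × F => P.2.2 ∈ C), P ≠ P' →
        q - 4 ≤ (Finset.univ.filter (fun t : {t : F // t ^ q = t} =>
          codeword q a b ε P t ≠ codeword q a b ε P' t)).card) ∧
    (∃ P ∈ Finset.univ.filter (fun P : F × F × F => P.2.2 ∈ C),
      ∃ P' ∈ Finset.univ.filter (fun P : F × F × F => P.2.2 ∈ C), P ≠ P' ∧
        (Finset.univ.filter (fun t : {t : F // t ^ q = t} =>
          codeword q a b ε P t ≠ codeword q a b ε P' t)).card = q - 4) := by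
  obtain ⟨φ, hφ⟩ := exists_ringHom_eq_pow hq hF
  have hφφ : Function.Involutive φ := fun x => by
    rw [hφ, hφ, ← pow_mul, ← sq, ← hF, FiniteField.pow_card]
  obtain ⟨hK, hrange⟩ := natCard_fixedPoints_and_range_conjSub (by omega : 1 < q)
    (Nat.card_eq_fintype_card.trans hF) hφ hφφ
  rw [Nat.card_eq_fintype_card] at hK
  simp only [← hφ, ← conjSub_eq_conjSub_iff] at hC
  set W := Finset.univ.filter fun P : F × F × F => P.2.2 ∈ C
  have hW : W.card = q ^ 5 := by
    rw [card_filter_snd_snd_mem, hF, card_eq_natCard_range_of_existsUnique hC, hrange]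
    ring
  have hdist : ∀ P ∈ W, ∀ Q ∈ W, P ≠ Q →
      q - 4 ≤ hammingDist (codeword q a b ε P) (codeword q a b ε Q) := by
    intro P hP Q hQ hne
    have hCinj : Set.InjOn (conjSub φ) C := fun c hc c' hc' h =>
      (hC c').unique ⟨hc, h⟩ ⟨hc', rfl⟩
    simpa only [hK] using card_sub_four_le_hammingDist_codeword hφ hφφ hab hε hCinj
      (Finset.mem_filter.1 hP).2 (Finset.mem_filter.1 hQ).2 hne
  have hinj : Set.InjOn (codeword q a b ε) W := injOn_of_le_hammingDist (by omega) hdist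
  obtain ⟨P, hP, Q, hQ, hne, hle⟩ := exists_ne_hammingDist_codeword_le (a := a) (b := b) (ε := ε)
    (W := W) (k := 4) hφ hφφ (by omega) (by omega) (hW ▸ Nat.pow_lt_pow_right (by omega) (by omega))
  exact ⟨fun P hP Q hQ => hinj hP hQ, hW ▸ Finset.card_image_of_injOn hinj, hdist,
    P, hP, Q, hQ, hne, (hK ▸ hle).antisymm (hdist P hP Q hQ hne)⟩

/-- For `q > 4`, the evaluation map `P ↦ (F_ω(P))_{ω ∈ Ω}` is injective on
`W = F² × C`, the resulting code has exactly `q⁵` codewords, any two distinct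
codewords differ in at least `q - 4` of the `q` coordinates, and the minimum
distance is exactly `q - 4`: the code is a `K`-linear `[q, 5, q-4]` MDS code. -/
theorem mds_code (q : ℕ) (hq : IsPrimePow q) (hq4 : 4 < q)
    (F : Type*) [Field F] [Fintype F] [DecidableEq F] (hF : Fintype.card F = q ^ 2)
    (a b : F) (ha : a ≠ 0) (hb : b ^ q ≠ b)
    (hab : 4 * a ^ (q + 1) + (b ^ q - b) ^ 2 ≠ 0)
    (ε : F) (hε : ε ^ q ≠ ε)
    (C : Finset F) (hC : ∀ x : F, ∃! c : F, c ∈ C ∧ (c - x) ^ q = c - x) :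
    (∀ P ∈ Finset.univ.filter (fun P : F × F × F => P.2.2 ∈ C),
      ∀ P' ∈ Finset.univ.filter (fun P : F × F × F => P.2.2 ∈ C),
        codeword q a b ε P = codeword q a b ε P' → P = P') ∧
    ((Finset.univ.filter (fun P : F × F × F => P.2.2 ∈ C)).image
        (codeword q a b ε)).card = q ^ 5 ∧
    (∀ P ∈ Finset.univ.filter (fun P : F × F × F => P.2.2 ∈ C),
      ∀ P' ∈ Finset.univ.filter (fun P : F × F × F => P.2.2 ∈ C), P ≠ P' →
        q - 4 ≤ (Finset.univ.filter (fun t : {t : F // t ^ q = t} =>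
          codeword q a b ε P t ≠ codeword q a b ε P' t)).card) ∧
    (∃ P ∈ Finset.univ.filter (fun P : F × F × F => P.2.2 ∈ C),
      ∃ P' ∈ Finset.univ.filter (fun P : F × F × F => P.2.2 ∈ C), P ≠ P' ∧
        (Finset.univ.filter (fun t : {t : F // t ^ q = t} =>
          codeword q a b ε P t ≠ codeword q a b ε P' t)).card = q - 4) := by
  exact mds_code_general q hq hq4 F hF a b hab ε hε C hC
end

section
/- Suppose q > 4. For t ∈ K set ω(t) = (t + εt², t³ + εt⁴) and θ = ε^q − ε (so θ ≠ 0 and T₀ = θ·K). Then: (i) for each P ∈ W there is a unique polynomial f_P ∈ F[t] of degree at most 4 such that f_P(t) = θ^{−1}·F_{ω(t)}(P) for all t ∈ K; (ii) every coefficient of f_P lies in K; and (iii) the map P ↦ f_P is a bijection from W onto the set of all polynomials of degree at most 4 with coefficients in K. Consequently the code {(θ^{−1}F_{ω(t)}(P))_{t ∈ K} : P ∈ W} equals the extended Reed–Solomon code {(f(t))_{t ∈ K} : f ∈ K[t], deg f ≤ 4}, a [q, 5, q−4] MDS code over K. -/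
open Function Polynomial

section Polynomial

variable {R : Type*} {n : ℕ}

theorem existsUnique_degree_le_toFn_eq [Semiring R] (v : Fin (n + 1) → R) :
    ∃! f : R[X], f.degree ≤ n ∧ toFn (n + 1) f = v := by
  classical
  refine ⟨ofFn (n + 1) v, ⟨?_, toFn_comp_ofFn_eq_id _ v⟩, ?_⟩
  · exact degree_le_of_natDegree_le (Nat.lt_succ_iff.1 (ofFn_natDegree_lt n.succ_pos v))
  · rintro f ⟨hf, rfl⟩
    exact (ofFn_comp_toFn_eq_id_of_natDegree_lt
      (Nat.lt_succ_iff.2 (natDegree_le_of_degree_le hf))).symm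

theorem eval_eq_sum_toFn [Semiring R] {f : R[X]} (hf : f.degree ≤ n) (t : R) :
    f.eval t = ∑ i, toFn (n + 1) f i * t ^ (i : ℕ) := by
  rw [eval_eq_sum_range' (Nat.lt_succ_iff.2 (natDegree_le_of_degree_le hf)), Finset.sum_range]
  rfl

theorem eq_of_degree_le_of_eqOn [CommRing R] [IsDomain R] {S : Set R} (hS : n < S.encard)
    {f g : R[X]} (hf : f.degree ≤ n) (hg : g.degree ≤ n) (h : S.EqOn f.eval g.eval) : f = g := by
  obtain ⟨T, hTS, hT⟩ := Set.exists_subset_encard_eq (Order.add_one_le_of_lt hS)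
  lift T to Finset R using Set.finite_of_encard_eq_coe (k := n + 1) (by simpa using hT)
  rw [Set.encard_coe_eq_coe_finsetCard] at hT
  have hcard : T.card = n + 1 := by exact_mod_cast hT
  have hn : (n : WithBot ℕ) < T.card := by
    rw [hcard]
    exact_mod_cast n.lt_succ_self
  exact eq_of_degrees_lt_of_eval_finset_eq T (hf.trans_lt hn) (hg.trans_lt hn)
    fun t ht ↦ h (hTS ht)

theorem forall_eval_eq_sum_iff_toFn_eq [CommRing R] [IsDomain R] {S : Set R} (hS : n < S.encard)
    {f : R[X]} (hf : f.degree ≤ n) (v : Fin (n + 1) → R) :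
    (∀ t ∈ S, f.eval t = ∑ i, v i * t ^ (i : ℕ)) ↔ toFn (n + 1) f = v := by
  obtain ⟨g, ⟨hg, rfl⟩, -⟩ := existsUnique_degree_le_toFn_eq v
  constructor
  · intro h
    rw [eq_of_degree_le_of_eqOn hS hf hg fun t ht ↦ (h t ht).trans (eval_eq_sum_toFn hg t).symm]
  · intro h t _
    rw [eval_eq_sum_toFn hf, h]

end Polynomial

section Involution

variable {F : Type*} [Field F] {σ : F →+* F} {ε : F}

theorem bijective_mul_add_mul_map (hσ : Involutive σ) {α β : F} (h : α * σ α - β * σ β ≠ 0) :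
    Bijective fun x ↦ α * x + β * σ x := by
  refine bijective_iff_has_inverse.2
    ⟨fun y ↦ (α * σ α - β * σ β)⁻¹ * (σ α * y - β * σ y), fun x ↦ ?_, fun y ↦ ?_⟩
  · simp only [map_add, map_mul, hσ _]
    field_simp
    ring
  · have hN : σ (α * σ α - β * σ β) = α * σ α - β * σ β := by
      simp only [map_sub, map_mul, hσ _]
      ring
    simp only [map_mul, map_inv₀, hN, map_sub, hσ _]
    field_simp
    ring

/-- The coordinate of `w` along `ε` in the decomposition `F = K ⊕ K ε`, where `K` is the fixed field
of the involution `σ`; it is `θ⁻¹ (σ w - w)` with `θ = σ ε - ε`. -/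
def coordAlong (σ : F →+* F) (ε w : F) : F :=
  (σ ε - ε)⁻¹ * (σ w - w)

theorem coordAlong_add (v w : F) :
    coordAlong σ ε (v + w) = coordAlong σ ε v + coordAlong σ ε w := by
  simp only [coordAlong, map_add]
  ring

theorem coordAlong_fixed_mul {c : F} (hc : σ c = c) (w : F) :
    coordAlong σ ε (c * w) = c * coordAlong σ ε w := by
  simp only [coordAlong, map_mul, hc]
  ring

theorem map_coordAlong (hσ : Involutive σ) (w : F) :
    σ (coordAlong σ ε w) = coordAlong σ ε w := by
  simp only [coordAlong, map_mul, map_inv₀, map_sub, hσ _]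
  rw [← neg_sub (σ ε), ← neg_sub (σ w), inv_neg, neg_mul_neg]

theorem coordAlong_eq_iff (hε : σ ε ≠ ε) {c : F} (hc : σ c = c) (w : F) :
    coordAlong σ ε w = c ↔ σ (w - c * ε) = w - c * ε := by
  rw [coordAlong, inv_mul_eq_iff_eq_mul₀ (sub_ne_zero.2 hε), map_sub, map_mul, hc]
  constructor <;> intro h <;> linear_combination h

theorem coordAlong_eq_and_coordAlong_mul_eq_iff (hσ : Involutive σ) (hε : σ ε ≠ ε) {c d : F}
    (hc : σ c = c) (hd : σ d = d) (w : F) :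
    coordAlong σ ε w = c ∧ coordAlong σ ε (ε * w) = d ↔ w = d - c * σ ε := by
  have hθ : σ ε - ε ≠ 0 := sub_ne_zero.2 hε
  constructor
  · rintro ⟨rfl, rfl⟩
    simp only [coordAlong, map_mul]
    field_simp
    ring
  · rintro rfl
    simp only [coordAlong, map_sub, map_mul, hc, hd, hσ _]
    constructor <;> field_simp <;> ring

theorem existsUnique_mem_coordAlong_eq (hε : σ ε ≠ ε) {C : Set F}
    (hC : ∀ x, ∃! c, c ∈ C ∧ σ (c - x) = c - x) {k : F} (hk : σ k = k) :
    ∃! z, z ∈ C ∧ coordAlong σ ε z = k := by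
  simpa only [coordAlong_eq_iff hε hk] using hC (k * ε)

theorem card_le_sq_card_fixedPoints [Finite F] (hσ : Involutive σ) (hε : σ ε ≠ ε) :
    Nat.card F ≤ Nat.card (fixedPoints σ) ^ 2 := by
  have hsurj : Surjective fun p : fixedPoints σ × fixedPoints σ ↦ (p.2 - p.1 * σ ε : F) := fun w ↦
    ⟨(⟨_, map_coordAlong hσ w⟩, ⟨_, map_coordAlong hσ (ε * w)⟩),
      ((coordAlong_eq_and_coordAlong_mul_eq_iff hσ hε (map_coordAlong hσ w)
        (map_coordAlong hσ (ε * w)) w).1 ⟨rfl, rfl⟩).symm⟩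
  simpa only [Nat.card_prod, sq] using Nat.card_le_card_of_surjective _ hsurj

/-- The semilinear map `M` for which the polar form of `x ↦ a x² - b x σ x` is `(h, x) ↦ h * M x`,
up to an element fixed by `σ`. -/
def polarMap (σ : F →+* F) (a b x : F) : F :=
  2 * a * x + (σ b - b) * σ x

theorem polarMap_bijective (hσ : Involutive σ) {a b : F}
    (hab : 4 * (a * σ a) + (σ b - b) ^ 2 ≠ 0) : Bijective (polarMap σ a b) := by
  refine bijective_mul_add_mul_map hσ ?_
  convert hab using 1
  simp only [map_mul, map_sub, map_ofNat, hσ _]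
  ring

/-- An element whose skew part `σ w - w` is the value `F_ω(x, y, z)`, see `Fw_eq_map_potential_sub`;
it is defined for an arbitrary involution `σ` in place of `x ↦ x ^ q`. -/
def potential (σ : F →+* F) (a b ω₁ ω₂ x y z : F) : F :=
  z + (a * x ^ 2 - b * (x * σ x)) + (a * y ^ 2 - b * (y * σ y))
    + ω₁ * polarMap σ a b x + ω₂ * polarMap σ a b y

theorem Fw_eq_map_potential_sub {q : ℕ} (hσq : ∀ x, σ x = x ^ q) (hσ : Involutive σ)
    (a b ω₁ ω₂ x y z : F) :
    Fw q a b ω₁ ω₂ x y z =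
      σ (potential σ a b ω₁ ω₂ x y z) - potential σ a b ω₁ ω₂ x y z := by
  have hsq (w : F) : w ^ (2 * q) = σ w ^ 2 := by rw [hσq, mul_comm, pow_mul]
  simp only [Fw, potential, polarMap, hsq, pow_succ _ q, ← hσq, map_add, map_sub, map_mul, map_pow,
    map_ofNat, hσ _]
  ring

/-- The coefficients, in increasing degree, of the quartic `f_P` attached to the point
`P = (x, y, z)`. -/
def codeCoeffs (σ : F →+* F) (ε a b : F) (P : F × F × F) : Fin 5 → F :=
  ![coordAlong σ ε (potential σ a b 0 0 P.1 P.2.1 P.2.2),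
    coordAlong σ ε (polarMap σ a b P.1), coordAlong σ ε (ε * polarMap σ a b P.1),
    coordAlong σ ε (polarMap σ a b P.2.1), coordAlong σ ε (ε * polarMap σ a b P.2.1)]

theorem coordAlong_potential_eq_sum_codeCoeffs {t : F} (ht : σ t = t) (a b : F) (P : F × F × F) :
    coordAlong σ ε (potential σ a b (t + ε * t ^ 2) (t ^ 3 + ε * t ^ 4) P.1 P.2.1 P.2.2) =
      ∑ i, codeCoeffs σ ε a b P i * t ^ (i : ℕ) := by
  have htpow (n : ℕ) : σ (t ^ n) = t ^ n := by rw [map_pow, ht]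
  have hexpand : potential σ a b (t + ε * t ^ 2) (t ^ 3 + ε * t ^ 4) P.1 P.2.1 P.2.2 =
      potential σ a b 0 0 P.1 P.2.1 P.2.2 +
        t * polarMap σ a b P.1 + t ^ 2 * (ε * polarMap σ a b P.1) +
        t ^ 3 * polarMap σ a b P.2.1 + t ^ 4 * (ε * polarMap σ a b P.2.1) := by
    simp only [potential]
    ring
  simp only [hexpand, coordAlong_add, coordAlong_fixed_mul ht, coordAlong_fixed_mul (htpow _),
    codeCoeffs, Fin.sum_univ_five]
  simp only [Fin.coe_ofNat_eq_mod, Nat.zero_mod, pow_zero, mul_one, Matrix.cons_val_zero,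
    Matrix.cons_val_one, Nat.one_mod, pow_one, Matrix.cons_val, Nat.reduceMod, Nat.mod_succ]
  ring

theorem map_codeCoeffs (hσ : Involutive σ) (a b : F) (P : F × F × F) (i : Fin 5) :
    σ (codeCoeffs σ ε a b P i) = codeCoeffs σ ε a b P i := by
  fin_cases i <;> exact map_coordAlong hσ _

theorem codeCoeffs_eq_iff (hσ : Involutive σ) (hε : σ ε ≠ ε) {a b : F} {v : Fin 5 → F}
    (hv : ∀ i, σ (v i) = v i) (x y z : F) :
    codeCoeffs σ ε a b (x, y, z) = v ↔
      polarMap σ a b x = v 2 - v 1 * σ ε ∧ polarMap σ a b y = v 4 - v 3 * σ ε ∧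
      coordAlong σ ε z = v 0 - coordAlong σ ε (potential σ a b 0 0 x y 0) := by
  have hsplit : potential σ a b 0 0 x y z = z + potential σ a b 0 0 x y 0 := by
    simp only [potential]
    ring
  have hpair (i j : Fin 5) (w : F) :=
    coordAlong_eq_and_coordAlong_mul_eq_iff hσ hε (hv i) (hv j) (polarMap σ a b w)
  rw [← hpair, ← hpair, eq_sub_iff_add_eq, ← coordAlong_add, ← hsplit, funext_iff]
  simp only [codeCoeffs, Fin.forall_fin_succ, Fin.succ_zero_eq_one, Fin.succ_one_eq_two,
    Fin.reduceSucc, Matrix.cons_val_zero, Matrix.cons_val_one, Matrix.cons_val,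
    IsEmpty.forall_iff, and_true]
  tauto

theorem existsUnique_codeCoeffs_eq (hσ : Involutive σ) (hε : σ ε ≠ ε) {a b : F}
    (hab : 4 * (a * σ a) + (σ b - b) ^ 2 ≠ 0) {C : Set F}
    (hC : ∀ x, ∃! c, c ∈ C ∧ σ (c - x) = c - x) {v : Fin 5 → F} (hv : ∀ i, σ (v i) = v i) :
    ∃! P : F × F × F, P.2.2 ∈ C ∧ codeCoeffs σ ε a b P = v := by
  obtain ⟨x, hx, hx_unique⟩ := (polarMap_bijective hσ hab).existsUnique (v 2 - v 1 * σ ε)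
  obtain ⟨y, hy, hy_unique⟩ := (polarMap_bijective hσ hab).existsUnique (v 4 - v 3 * σ ε)
  have hconst : σ (v 0 - coordAlong σ ε (potential σ a b 0 0 x y 0)) =
      v 0 - coordAlong σ ε (potential σ a b 0 0 x y 0) := by
    rw [map_sub, hv, map_coordAlong hσ]
  obtain ⟨z, ⟨hzC, hz⟩, hz_unique⟩ := existsUnique_mem_coordAlong_eq hε hC hconst
  refine ⟨(x, y, z), ⟨hzC, (codeCoeffs_eq_iff hσ hε hv x y z).2 ⟨hx, hy, hz⟩⟩, ?_⟩
  rintro ⟨x', y', z'⟩ ⟨hz'C, hP⟩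
  obtain ⟨hx', hy', hz'⟩ := (codeCoeffs_eq_iff hσ hε hv x' y' z').1 hP
  obtain rfl : x' = x := hx_unique x' hx'
  obtain rfl : y' = y := hy_unique y' hy'
  obtain rfl : z' = z := hz_unique z' ⟨hz'C, hz'⟩
  rfl

theorem code_is_extended_reed_solomon_general (hσ : Involutive σ)
    (hK : 4 < (fixedPoints σ).encard) {a b : F} (hab : 4 * (a * σ a) + (σ b - b) ^ 2 ≠ 0)
    (hε : σ ε ≠ ε) {C : Set F} (hC : ∀ x, ∃! c, c ∈ C ∧ σ (c - x) = c - x) :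
    (∀ P : F × F × F, ∃! f : F[X], f.degree ≤ 4 ∧ ∀ t, σ t = t →
      f.eval t =
        coordAlong σ ε (potential σ a b (t + ε * t ^ 2) (t ^ 3 + ε * t ^ 4) P.1 P.2.1 P.2.2)) ∧
    (∀ P : F × F × F, ∀ f : F[X], f.degree ≤ 4 →
      (∀ t, σ t = t → f.eval t =
        coordAlong σ ε (potential σ a b (t + ε * t ^ 2) (t ^ 3 + ε * t ^ 4) P.1 P.2.1 P.2.2)) →
      ∀ i, σ (f.coeff i) = f.coeff i) ∧
    (∀ f : F[X], f.degree ≤ 4 → (∀ i, σ (f.coeff i) = f.coeff i) →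
      ∃! P : F × F × F, P.2.2 ∈ C ∧ ∀ t, σ t = t → f.eval t =
        coordAlong σ ε (potential σ a b (t + ε * t ^ 2) (t ^ 3 + ε * t ^ 4) P.1 P.2.1 P.2.2)) := by
  have hcode {f : F[X]} (hf : f.degree ≤ 4) (P : F × F × F) :
      (∀ t, σ t = t → f.eval t =
        coordAlong σ ε (potential σ a b (t + ε * t ^ 2) (t ^ 3 + ε * t ^ 4) P.1 P.2.1 P.2.2)) ↔
      toFn 5 f = codeCoeffs σ ε a b P := by
    rw [← forall_eval_eq_sum_iff_toFn_eq hK hf]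
    exact forall₂_congr fun t ht ↦ by rw [coordAlong_potential_eq_sum_codeCoeffs ht]
  refine ⟨fun P ↦ ?_, fun P f hf hfP i ↦ ?_, fun f hf hfK ↦ ?_⟩
  · exact (existsUnique_congr fun f ↦ and_congr_right fun hf ↦ hcode hf P).2
      (existsUnique_degree_le_toFn_eq (codeCoeffs σ ε a b P))
  · obtain hi | hi := le_or_gt i 4
    · have hcoeff : f.coeff i = codeCoeffs σ ε a b P ⟨i, Nat.lt_succ_iff.2 hi⟩ :=
        congrFun ((hcode hf P).1 hfP) ⟨i, Nat.lt_succ_iff.2 hi⟩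
      rw [hcoeff, map_codeCoeffs hσ]
    · rw [coeff_eq_zero_of_degree_lt (hf.trans_lt (by exact_mod_cast hi)), map_zero]
  · exact (existsUnique_congr fun P ↦ and_congr_right fun _ ↦ (hcode hf P).trans eq_comm).2
      (existsUnique_codeCoeffs_eq hσ hε hab hC fun i ↦ hfK i)

end Involution

section FiniteField

variable {F : Type*} [Field F] [Fintype F] {q : ℕ}

theorem exists_ringHom_eq_pow_s18 {n : ℕ} (hq : IsPrimePow q) (hF : Fintype.card F = q ^ n) :
    ∃ σ : F →+* F, ∀ x, σ x = x ^ q := by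
  obtain ⟨p, k, hp, -, rfl⟩ := hq
  have : Fact p.Prime := ⟨hp.nat_prime⟩
  have : CharP F p := charP_of_card_eq_prime_pow (hF.trans (pow_mul p k n).symm)
  exact ⟨iterateFrobenius F p k, iterateFrobenius_def p k⟩

theorem involutive_of_eq_pow (hF : Fintype.card F = q ^ 2) {σ : F →+* F}
    (hσq : ∀ x, σ x = x ^ q) : Involutive σ := fun x ↦ by
  rw [hσq, hσq, ← pow_mul, ← sq, ← hF, FiniteField.pow_card]

theorem le_encard_fixedPoints (hF : Fintype.card F = q ^ 2) {σ : F →+* F} {ε : F}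
    (hσ : Involutive σ) (hε : σ ε ≠ ε) : q ≤ (fixedPoints σ).encard := by
  have hle := card_le_sq_card_fixedPoints hσ hε
  rw [Nat.card_eq_fintype_card, hF, Nat.pow_le_pow_iff_left two_ne_zero] at hle
  rw [← (Set.toFinite _).cast_ncard_eq]
  exact_mod_cast hle

end FiniteField

/-- With `ω(t) = (t + εt², t³ + εt⁴)` and `θ = ε^q - ε`:
(i) for each `P ∈ W = F² × C` there is a unique polynomial `f_P` of degree at
most 4 with `f_P(t) = θ⁻¹·F_{ω(t)}(P)` for all `t ∈ K`;
(ii) every coefficient of such a polynomial lies in `K`;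
(iii) conversely every polynomial of degree at most 4 with coefficients in `K`
arises this way from a unique `P ∈ W`.
Hence the code `{(θ⁻¹F_{ω(t)}(P))_{t ∈ K} : P ∈ W}` equals the extended
Reed–Solomon code of degree ≤ 4 polynomials over `K`. -/
theorem code_is_extended_reed_solomon (q : ℕ) (hq : IsPrimePow q) (hq4 : 4 < q)
    (F : Type*) [Field F] [Fintype F] (hF : Fintype.card F = q ^ 2)
    (a b : F) (ha : a ≠ 0) (hb : b ^ q ≠ b)
    (hab : 4 * a ^ (q + 1) + (b ^ q - b) ^ 2 ≠ 0)
    (ε : F) (hε : ε ^ q ≠ ε)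
    (C : Finset F) (hC : ∀ x : F, ∃! c : F, c ∈ C ∧ (c - x) ^ q = c - x) :
    (∀ P : F × F × F, P.2.2 ∈ C →
      ∃! f : Polynomial F, f.degree ≤ 4 ∧
        ∀ t : F, t ^ q = t →
          f.eval t = (ε ^ q - ε)⁻¹ *
            Fw q a b (t + ε * t ^ 2) (t ^ 3 + ε * t ^ 4) P.1 P.2.1 P.2.2) ∧
    (∀ P : F × F × F, P.2.2 ∈ C →
      ∀ f : Polynomial F, f.degree ≤ 4 →
        (∀ t : F, t ^ q = t →
          f.eval t = (ε ^ q - ε)⁻¹ *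
            Fw q a b (t + ε * t ^ 2) (t ^ 3 + ε * t ^ 4) P.1 P.2.1 P.2.2) →
        ∀ i : ℕ, (f.coeff i) ^ q = f.coeff i) ∧
    (∀ f : Polynomial F, f.degree ≤ 4 → (∀ i : ℕ, (f.coeff i) ^ q = f.coeff i) →
      ∃! P : F × F × F, P.2.2 ∈ C ∧
        ∀ t : F, t ^ q = t →
          f.eval t = (ε ^ q - ε)⁻¹ *
            Fw q a b (t + ε * t ^ 2) (t ^ 3 + ε * t ^ 4) P.1 P.2.1 P.2.2) := by
  obtain ⟨σ, hσq⟩ := exists_ringHom_eq_pow_s18 hq hF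
  have hσ : Involutive σ := involutive_of_eq_pow hF hσq
  simp only [pow_succ' _ q, Fw_eq_map_potential_sub hσq hσ, ← hσq] at hab hε hC ⊢
  have hK : 4 < (fixedPoints σ).encard :=
    (by exact_mod_cast hq4 : (4 : ℕ∞) < q).trans_le (le_encard_fixedPoints hF hσ hε)
  obtain ⟨hexists, hfixed, hbij⟩ := code_is_extended_reed_solomon_general hσ hK hab hε (C := C) hC
  exact ⟨fun P _ ↦ hexists P, fun P _ ↦ hfixed P, hbij⟩
end
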